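/- arXiv:2305.12294 — 2 statements merged into one kernel-verified Lean document; each statement's English description precedes it below -/
import Mathlib

section
/- Let M be an o-minimal structure and let (A, τ) be a topological space definable in M with A countable. Then (A, τ) is second-countable, i.e. τ has a countable basis. -/
open FirstOrder FirstOrder.Language Set Cardinal Filter Topology

universe u

/-- A subset of a linear order is a finite union of points and open intervals
with endpoints in `M ∪ {-∞, +∞}` (lower endpoints in `WithBot M = M ∪ {-∞}`,
upper endpoints in `WithTop M = M ∪ {+∞}`). -/
def IsFinUnionPointsIntervals {M : Type*} [LinearOrder M] (s : Set M) : Prop :=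
  ∃ (P : Finset M) (I : Finset (WithBot M × WithTop M)),
    s = ↑P ∪ ⋃ p ∈ I, {x : M | p.1 < (x : WithBot M) ∧ (x : WithTop M) < p.2}

/-- `M` is an o-minimal `L`-structure: the language defines the linear order of `M`,
which is dense and without endpoints, and every subset of `M` definable with parameters
is a finite union of points and open intervals with endpoints in `M ∪ {-∞, +∞}`. -/
structure IsOMinimal (L : FirstOrder.Language) (M : Type*) [L.Structure M] [LinearOrder M] :
    Prop where
  denselyOrdered : DenselyOrdered M
  noMinOrder : NoMinOrder M
  noMaxOrder : NoMaxOrder M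
  definable_lt : (∅ : Set M).Definable L {x : Fin 2 → M | x 0 < x 1}
  tame : ∀ s : Set M, (Set.univ : Set M).Definable₁ L s → IsFinUnionPointsIntervals s

/-- A topological space `(A, t)` is definable in the structure `M` when `A ⊆ M^n` is a
definable set and the topology `t` admits a definable basis, i.e. a basis of the form
`{ψ(A;b) : b ∈ S}` for some formula `ψ(x;y)` and definable set `S ⊆ M^|y|`. -/
def IsDefinableTopSpace (L : FirstOrder.Language) {M : Type*} [L.Structure M] {n : ℕ}
    (A : Set (Fin n → M)) (t : TopologicalSpace A) : Prop :=
  (Set.univ : Set M).Definable L A ∧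
  ∃ (k : ℕ) (ψ : L.Formula (Fin n ⊕ Fin k)) (S : Set (Fin k → M)),
    (Set.univ : Set M).Definable L S ∧
    @TopologicalSpace.IsTopologicalBasis A t
      ((fun b => {x : A | ψ.Realize (Sum.elim (x : Fin n → M) b)}) '' S)

/-!
It suffices that a definable family `ψ(A; b)`, `b ∈ M ^ k`, of subsets of the countable definable
set `A` has countably many members, which is proved by induction on `k`. Split off the last
parameter, writing `ψ(A; b, c)`, and let `E b` be the union over `a ∈ A` of the finite boundaries of
the sets `ψ(a; b, ·) ⊆ M`. Since `A` is definable, so is `E b`, and its boundary is finite as well.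

* If `c ∈ E b`, then `c` is the `j`-th boundary point of `ψ(a; b, ·)` for some `j` and `a ∈ A`.
* If `c` is in the boundary of `E b`, then it is the `j`-th boundary point of `E b` for some `j`.
* Otherwise `c` lies in an open interval `(d, e)` disjoint from `E b`, where `d` is `-∞` or a
  boundary point of `E b`. All `ψ(a; b, ·)` are constant on this interval, so `ψ(A; b, c)` consists
  of the `a ∈ A` such that `ψ(a; b, ·)` holds immediately to the right of `d`.

In each of these countably many cases `c` is eliminated in favour of a definable function of `b`, so
the induction hypothesis applies.
-/

section Definability

variable (L : FirstOrder.Language) {M ι κ α : Type*} [L.Structure M]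

/-- A relation on `M ^ ι` is definable in `M`, with parameters. Arbitrary index types `ι` serve as
sets of variables, so that quantifying and substituting variables needs no renumbering. -/
def DefinablePred (R : (ι → M) → Prop) : Prop :=
  (univ : Set M).Definable L {v | R v}

/-- The sets `G v ⊆ M`, for `v ∈ M ^ ι`, form a definable family: the relation `x ∈ G v` is
definable. As in `Function.tupleGraph`, the variable `x` has index `none`. -/
def DefinableFamily (G : (ι → M) → Set M) : Prop :=
  DefinablePred L fun w : Option ι → M => w none ∈ G fun i => w (some i)

variable {L}

namespace DefinablePred

variable {R S : (ι → M) → Prop}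

theorem and (hR : DefinablePred L R) (hS : DefinablePred L S) :
    DefinablePred L fun v => R v ∧ S v :=
  Set.Definable.inter hR hS

theorem not (hR : DefinablePred L R) : DefinablePred L fun v => ¬R v :=
  Set.Definable.compl hR

theorem imp (hR : DefinablePred L R) (hS : DefinablePred L S) :
    DefinablePred L fun v => R v → S v := by
  simpa only [not_and_not_right] using (hR.and hS.not).not

theorem comp (hR : DefinablePred L R) (f : ι → κ) :
    DefinablePred L fun w : κ → M => R fun i => w (f i) :=
  Set.Definable.preimage_comp f hR

theorem sumElim [Finite α] [Finite ι] {R : (α ⊕ ι → M) → Prop} (hR : DefinablePred L R)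
    (a : α → M) : DefinablePred L fun v : ι → M => R (Sum.elim a v) := by
  refine Set.Definable.preimage_map (F := fun v : ι → M => Sum.elim a v) ?_ hR
  rintro (i | i)
  · exact L.definableFun_const ι (mem_univ (a i))
  · exact DefinableFun.proj L

theorem exists_tuple [Finite α] {R : (ι → M) → (α → M) → Prop}
    (hR : DefinablePred L fun w : ι ⊕ α → M => R (fun i => w (.inl i)) fun j => w (.inr j)) :
    DefinablePred L fun v => ∃ u, R v u :=
  Set.Definable.exists_of_finite hR

theorem exists_elem {R : (ι → M) → M → Prop}
    (hR : DefinablePred L fun w : Option ι → M => R (fun i => w (some i)) (w none)) :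
    DefinablePred L fun v => ∃ x, R v x := by
  have hR' : DefinablePred L fun v => ∃ u : Unit → M, R v (u ()) :=
    exists_tuple (hR.comp fun j => j.elim (Sum.inr ()) Sum.inl)
  simpa only [(Equiv.funUnique Unit M).symm.surjective.exists, Equiv.funUnique_symm_apply,
    uniqueElim_const] using hR'

theorem forall_elem {R : (ι → M) → M → Prop}
    (hR : DefinablePred L fun w : Option ι → M => R (fun i => w (some i)) (w none)) :
    DefinablePred L fun v => ∀ x, R v x := by
  simpa only [not_exists_not] using (exists_elem (R := fun v x => ¬R v x) hR.not).not

end DefinablePred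

namespace DefinableFamily

variable {G : (ι → M) → Set M}

theorem mem (hG : DefinableFamily L G) (f : ι → κ) (j : κ) :
    DefinablePred L fun w : κ → M => w j ∈ G fun i => w (f i) :=
  DefinablePred.comp hG fun i => i.elim j f

theorem sumElim [Finite α] [Finite ι] {G : (α ⊕ ι → M) → Set M} (hG : DefinableFamily L G)
    (a : α → M) : DefinableFamily L fun v : ι → M => G (Sum.elim a v) := by
  have hG' := (hG.mem (κ := α ⊕ Option ι) (Sum.map id some) (.inr none)).sumElim a
  simpa only [DefinableFamily, ← Function.comp_def, Sum.elim_comp_map,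
    Function.comp_id, Sum.elim_inr] using hG'

theorem iUnion [Finite α] {A : Set (α → M)} (hA : (univ : Set M).Definable L A)
    {G : (α ⊕ ι → M) → Set M} (hG : DefinableFamily L G) :
    DefinableFamily L fun v : ι → M => ⋃ a : A, G (Sum.elim a v) := by
  have hA' : DefinablePred L (· ∈ A) := hA
  have hG' : DefinablePred L fun v : Option ι → M =>
      ∃ a, a ∈ A ∧ v none ∈ G (Sum.elim a fun i => v (some i)) := by
    refine .exists_tuple ((hA'.comp _).and ?_)
    convert! hG.mem (Sum.elim Sum.inr (Sum.inl ∘ some)) (Sum.inl none) using 4 with w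
    ext (i | i) <;> rfl
  simpa only [DefinableFamily, mem_iUnion, Subtype.exists, exists_prop] using hG'

theorem snoc {k : ℕ} {S : Set (α ⊕ Fin (k + 1) → M)} (hS : (univ : Set M).Definable L S) :
    DefinableFamily L fun w : α ⊕ Fin k → M =>
      {c | Sum.elim (fun i => w (.inl i))
        (Fin.snoc (fun j => w (.inr j)) c : Fin (k + 1) → M) ∈ S} := by
  have hS' : DefinablePred L (· ∈ S) := hS
  have h := hS'.comp (Sum.elim (some ∘ Sum.inl) (Fin.snoc (some ∘ Sum.inr) none : Fin (k + 1) → _))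
  simp only [← Function.comp_def, Sum.comp_elim, Fin.comp_snoc] at h
  exact h

end DefinableFamily

end Definability

section DefinableOrder

/-- The strict order of `M` is definable without parameters in the `L`-structure `M`. -/
class DefinableLT (L : FirstOrder.Language) (M : Type*) [L.Structure M] [LT M] : Prop where
  definable_lt : (∅ : Set M).Definable L {x : Fin 2 → M | x 0 < x 1}

variable {L : FirstOrder.Language} {M ι : Type*} [L.Structure M]

theorem DefinablePred.lt [LT M] [DefinableLT L M] (i j : ι) :
    DefinablePred L fun w : ι → M => w i < w j :=
  (DefinableLT.definable_lt.mono (empty_subset univ)).preimage_comp ![i, j]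

/-- A set without its least element, if it has one. -/
def dropLeast [LT M] (s : Set M) : Set M :=
  {x ∈ s | ∃ y ∈ s, y < x}

namespace DefinableFamily

theorem dropLeast_iterate [LT M] [DefinableLT L M] {G : (ι → M) → Set M}
    (hG : DefinableFamily L G) (j : ℕ) : DefinableFamily L fun v => dropLeast^[j] (G v) := by
  induction j with
  | zero => exact hG
  | succ j ih =>
    simp only [Function.iterate_succ_apply']
    exact .and ih (.exists_elem (.and (ih.mem _ _) (.lt _ _)))

variable [LinearOrder M] [DefinableLT L M] {G : (ι → M) → Set M}

theorem isLeast (hG : DefinableFamily L G) : DefinableFamily L fun v => {x | IsLeast (G v) x} := by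
  simp only [IsLeast, mem_lowerBounds, ← not_lt]
  exact .and hG (.forall_elem (.imp (hG.mem _ _) (.not (.lt _ _))))

theorem eventually_atBot [Nonempty M] (hG : DefinableFamily L G) :
    DefinablePred L fun v => ∀ᶠ x in atBot, x ∈ G v := by
  simp only [Filter.eventually_atBot, ← not_lt]
  exact .exists_elem (.forall_elem (.imp (.not (.lt _ _)) (hG.mem _ _)))

variable [TopologicalSpace M] [OrderTopology M] [NoMaxOrder M]

theorem eventually_nhdsGT (hG : DefinableFamily L G) :
    DefinableFamily L fun v => {c | ∀ᶠ x in 𝓝[>] c, x ∈ G v} := by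
  simp only [Filter.Eventually, Set.ofPred_mem_eq, mem_nhdsGT_iff_exists_Ioo_subset]
  exact .exists_elem (.and (.lt _ _)
    (.forall_elem (.imp (.and (.lt _ _) (.lt _ _)) (hG.mem _ _))))

variable [NoMinOrder M]

theorem interior (hG : DefinableFamily L G) : DefinableFamily L fun v => interior (G v) := by
  simp only [DefinableFamily, mem_interior_iff_mem_nhds, mem_nhds_iff_exists_Ioo_subset]
  exact .exists_elem (.exists_elem (.and (.and (.lt _ _) (.lt _ _))
    (.forall_elem (.imp (.and (.lt _ _) (.lt _ _)) (hG.mem _ _)))))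

theorem frontier (hG : DefinableFamily L G) : DefinableFamily L fun v => frontier (G v) := by
  simp only [_root_.frontier, closure_eq_compl_interior_compl]
  exact .and (.not (interior (G := fun v => (G v)ᶜ) (.not hG))) (.not hG.interior)

end DefinableFamily

end DefinableOrder

theorem exists_isLeast_dropLeast_iterate {M : Type*} [LinearOrder M] {s : Set M} (hs : s.Finite)
    {c : M} (hc : c ∈ s) : ∃ j, IsLeast (dropLeast^[j] s) c := by
  induction hn : s.ncard using Nat.strong_induction_on generalizing s with | _ n ih
  by_cases hleast : IsLeast s c
  · exact ⟨0, hleast⟩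
  · obtain ⟨m, hm⟩ : ∃ m, IsLeast s m := exists_min_image s id hs ⟨c, hc⟩
    have hsub : dropLeast s ⊆ s := sep_subset _ _
    have hssub : dropLeast s ⊂ s := hsub.ssubset_of_mem_notMem hm.1
      fun hm' => hm'.2.elim fun y hy => (hm.2 hy.1).not_gt hy.2
    have hc' : c ∈ dropLeast s :=
      ⟨hc, m, hm.1, (hm.2 hc).lt_of_ne fun hmc => hleast (hmc ▸ hm)⟩
    obtain ⟨j, hj⟩ := ih _ (hn ▸ ncard_lt_ncard hssub hs) (hs.subset hsub) hc' rfl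
    exact ⟨j + 1, hj⟩

theorem notMem_frontier_iff_eventually_mem_iff {X : Type*} [TopologicalSpace X] {s : Set X}
    {c : X} : c ∉ frontier s ↔ ∀ᶠ z in 𝓝 c, (z ∈ s ↔ c ∈ s) := by
  by_cases hc : c ∈ s
  · simp only [frontier, Set.mem_sdiff, subset_closure hc, true_and, not_not, hc, iff_true]
    exact mem_interior_iff_mem_nhds
  · rw [← frontier_compl]
    simp only [frontier, Set.mem_sdiff, subset_closure (mem_compl hc), true_and, not_not, hc,
      iff_false]
    exact mem_interior_iff_mem_nhds

section Separates

/-- `F` separates `s` from its complement: a closed interval with one endpoint in `s` and the other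
one outside `s` meets `F`. -/
def Separates {M : Type*} [Preorder M] (F s : Set M) : Prop :=
  ∀ ⦃x y⦄, x ≤ y → Disjoint (Icc x y) F → (x ∈ s ↔ y ∈ s)

section Preorder

variable {M : Type*} [Preorder M] {F s : Set M}

theorem separates_self (s : Set M) : Separates s s := fun _ _ hxy hdisj =>
  iff_of_false (hdisj.notMem_of_mem_left (left_mem_Icc.2 hxy))
    (hdisj.notMem_of_mem_left (right_mem_Icc.2 hxy))

theorem Separates.union {G t : Set M} (hs : Separates F s) (ht : Separates G t) :
    Separates (F ∪ G) (s ∪ t) := fun _ _ hxy hdisj =>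
  or_congr (hs hxy (hdisj.mono_right subset_union_left))
    (ht hxy (hdisj.mono_right subset_union_right))

theorem Separates.biUnion {ι : Type*} {I : Set ι} {F s : ι → Set M}
    (h : ∀ i, Separates (F i) (s i)) : Separates (⋃ i ∈ I, F i) (⋃ i ∈ I, s i) := by
  intro x y hxy hdisj
  simp only [mem_iUnion, exists_prop]
  exact exists_congr fun i => and_congr_right fun hi =>
    h i hxy (hdisj.mono_right (subset_biUnion_of_mem hi))

end Preorder

variable {M : Type*} [LinearOrder M] {F s : Set M}

theorem separates_endpoints (a : WithBot M) (b : WithTop M) :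
    Separates {x : M | x = a ∨ x = b} {x : M | a < x ∧ x < b} := by
  intro x y hxy hdisj
  have hbetween : ∀ m : M, x ≤ m → m ≤ y → ¬(m = a ∨ m = b) :=
    fun m hxm hmy => hdisj.notMem_of_mem_left ⟨hxm, hmy⟩
  refine and_congr ?_ ?_
  · cases a with
    | bot => simp
    | coe a => grind [WithBot.coe_lt_coe]
  · cases b with
    | top => simp
    | coe b => grind [WithTop.coe_lt_coe]

theorem IsFinUnionPointsIntervals.exists_finite_separates (hs : IsFinUnionPointsIntervals s) :
    ∃ F, F.Finite ∧ Separates F s := by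
  obtain ⟨P, I, rfl⟩ := hs
  refine ⟨_, P.finite_toSet.union (I.finite_toSet.biUnion fun p _ => ?_),
    (separates_self _).union (.biUnion fun p => separates_endpoints p.1 p.2)⟩
  exact ((finite_singleton p.1).preimage WithBot.coe_injective.injOn).union
    ((finite_singleton p.2).preimage WithTop.coe_injective.injOn)

variable [TopologicalSpace M] [OrderTopology M] [NoMinOrder M] [NoMaxOrder M]

theorem Separates.frontier_subset (h : Separates F s) (hF : F.Finite) : frontier s ⊆ F := by
  intro c
  contrapose!
  intro hcF
  obtain ⟨l, u, hc, hlu⟩ :=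
    mem_nhds_iff_exists_Ioo_subset.1 (hF.isClosed.isOpen_compl.mem_nhds hcF)
  have hdisj : ∀ {x y}, x ∈ Ioo l u → y ∈ Ioo l u → Disjoint (Icc x y) F := fun hx hy =>
    disjoint_left.2 fun _ hw => hlu (ordConnected_Ioo.out hx hy hw)
  rw [notMem_frontier_iff_eventually_mem_iff]
  filter_upwards [Ioo_mem_nhds hc.1 hc.2] with z hz
  rcases le_total z c with hzc | hcz
  · exact h hzc (hdisj hz hc)
  · exact (h hcz (hdisj hc hz)).symm

theorem IsFinUnionPointsIntervals.finite_frontier (hs : IsFinUnionPointsIntervals s) :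
    (frontier s).Finite := by
  obtain ⟨F, hF, hFs⟩ := hs.exists_finite_separates
  exact hF.subset (hFs.frontier_subset hF)

variable [DenselyOrdered M]

theorem Separates.of_insert {f : M} (h : Separates (insert f F) s) (hf : f ∉ frontier s) :
    Separates F s := by
  rw [notMem_frontier_iff_eventually_mem_iff] at hf
  have left : ∀ x ≤ f, Disjoint (Icc x f) F → (x ∈ s ↔ f ∈ s) := by
    intro x hxf hdisj
    rcases hxf.eq_or_lt with rfl | hxf
    · rfl
    obtain ⟨z, hzs, hz⟩ :=
      ((hf.filter_mono nhdsWithin_le_nhds).and (Ioo_mem_nhdsLT hxf)).exists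
    refine (h hz.1.le (disjoint_insert_right.2 ⟨fun hfz => hz.2.not_ge hfz.2, ?_⟩)).trans hzs
    exact hdisj.mono_left (Icc_subset_Icc_right hz.2.le)
  have right : ∀ y, f ≤ y → Disjoint (Icc f y) F → (f ∈ s ↔ y ∈ s) := by
    intro y hfy hdisj
    rcases hfy.eq_or_lt with rfl | hfy
    · rfl
    obtain ⟨z, hzs, hz⟩ :=
      ((hf.filter_mono nhdsWithin_le_nhds).and (Ioo_mem_nhdsGT hfy)).exists
    refine hzs.symm.trans (h hz.2.le (disjoint_insert_right.2 ⟨fun hfz => hz.1.not_ge hfz.1, ?_⟩))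
    exact hdisj.mono_left (Icc_subset_Icc_left hz.1.le)
  intro x y hxy hdisj
  by_cases hxfy : f ∈ Icc x y
  · exact (left x hxfy.1 (hdisj.mono_left (Icc_subset_Icc_right hxfy.2))).trans
      (right y hxfy.2 (hdisj.mono_left (Icc_subset_Icc_left hxfy.1)))
  · exact h hxy (disjoint_insert_right.2 ⟨hxfy, hdisj⟩)

theorem Separates.frontier (h : Separates F s) (hF : F.Finite) :
    Separates (frontier s) s := by
  have h' : Separates (F ∪ _root_.frontier s) s :=
    fun x y hxy hdisj => h hxy (hdisj.mono_right subset_union_left)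
  clear h
  induction F, hF using Set.Finite.induction_on with
  | empty => simpa using h'
  | @insert f F _ _ ih =>
    by_cases hf : f ∈ _root_.frontier s
    · exact ih (by rwa [insert_union, insert_eq_of_mem (mem_union_right F hf)] at h')
    · exact ih (.of_insert (by rwa [insert_union] at h') hf)

theorem IsFinUnionPointsIntervals.separates_frontier (hs : IsFinUnionPointsIntervals s) :
    Separates (frontier s) s := by
  obtain ⟨F, hF, hFs⟩ := hs.exists_finite_separates
  exact hFs.frontier hF

end Separates

section CommonGerm

variable {M ι : Type*}

theorem mem_iff_eventually_mem {l : Filter M} [l.NeBot] {t : Set M} {c : M}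
    (h : ∀ᶠ z in l, (z ∈ t ↔ c ∈ t)) : c ∈ t ↔ ∀ᶠ z in l, z ∈ t :=
  ((eventually_congr h).trans eventually_const).symm

variable [TopologicalSpace M]

/-- The points at which membership in one of the sets `s i` jumps. -/
def jumps (s : ι → Set M) : Set M :=
  ⋃ i, frontier (s i)

variable {s : ι → Set M} {c : M}

theorem mem_iff_mem_of_notMem_jumps [Preorder M] (hs : ∀ i, Separates (frontier (s i)) (s i))
    (hE : Separates (frontier (jumps s)) (jumps s)) (hc : c ∉ jumps s) {x : M} (hxc : x ≤ c)
    (hdisj : Disjoint (Icc x c) (frontier (jumps s))) (i : ι) : x ∈ s i ↔ c ∈ s i :=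
  hs i hxc <| disjoint_left.2 fun _ hz hzi =>
    hc ((hE hz.2 (hdisj.mono_left (Icc_subset_Icc_left hz.1))).1 (mem_iUnion_of_mem i hzi))

theorem mem_iff_eventually_nhdsGT_or_atBot [LinearOrder M] [OrderTopology M] [DenselyOrdered M]
    [NoMinOrder M] [NoMaxOrder M] (hs : ∀ i, IsFinUnionPointsIntervals (s i))
    (hE : IsFinUnionPointsIntervals (jumps s)) (hc : c ∉ jumps s) (hcE : c ∉ frontier (jumps s)) :
    (∃ d ∈ frontier (jumps s), ∀ i, c ∈ s i ↔ ∀ᶠ z in 𝓝[>] d, z ∈ s i) ∨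
      ∀ i, c ∈ s i ↔ ∀ᶠ z in atBot, z ∈ s i := by
  have : Nonempty M := ⟨c⟩
  have hconst : ∀ x ≤ c, Disjoint (Icc x c) (frontier (jumps s)) → ∀ i, (x ∈ s i ↔ c ∈ s i) :=
    fun _ => mem_iff_mem_of_notMem_jumps (fun i => (hs i).separates_frontier)
      hE.separates_frontier hc
  have hlt : ∀ w ∈ frontier (jumps s), w ≤ c → w < c :=
    fun w hw hwc => hwc.lt_of_ne fun heq => hcE (heq ▸ hw)
  rcases (frontier (jumps s) ∩ Iio c).eq_empty_or_nonempty with hempty | hne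
  · refine .inr fun i => mem_iff_eventually_mem ?_
    filter_upwards [eventually_le_atBot c] with z hzc
    refine hconst z hzc (disjoint_left.2 fun w hw hwE => ?_) i
    exact hempty.subset ⟨hwE, hlt w hwE hw.2⟩
  · obtain ⟨d, ⟨hdE, hdc⟩, hd⟩ := exists_max_image _ id (hE.finite_frontier.inter_of_left _) hne
    refine .inl ⟨d, hdE, fun i => mem_iff_eventually_mem ?_⟩
    filter_upwards [Ioo_mem_nhdsGT hdc] with z hz
    refine hconst z hz.2.le (disjoint_left.2 fun w hw hwE => ?_) i
    exact (hz.1.trans_le hw.1).not_ge (hd w ⟨hwE, hlt w hwE hw.2⟩)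

end CommonGerm

section Traces

variable {L : FirstOrder.Language} {M α κ : Type*} [L.Structure M] {A : Set (α → M)}

/-- The subset of `A ⊆ M ^ α` cut out by `S ⊆ M ^ α × M ^ κ` at the parameter `b ∈ M ^ κ`. -/
def trace (A : Set (α → M)) (S : Set (α ⊕ κ → M)) (b : κ → M) : Set (α → M) :=
  {a ∈ A | Sum.elim a b ∈ S}

variable (L κ A) in
/-- Every definable family, with parameters in `M ^ κ`, of subsets of `A` has countably many
members. -/
def CountableTraces : Prop :=
  ∀ S : Set (α ⊕ κ → M), (univ : Set M).Definable L S → (range (trace A S)).Countable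

/-- The subset of `A ⊆ M ^ α` cut out at the parameter `(b, c) ∈ M ^ κ × M` by a family of subsets
of `M`: the `trace` with the last parameter split off. -/
def traceAt (A : Set (α → M)) (Ψ : (α ⊕ κ → M) → Set M) (b : κ → M) (c : M) : Set (α → M) :=
  {a ∈ A | c ∈ Ψ (Sum.elim a b)}

variable {G : (κ → M) → Set M} {Ψ : (α ⊕ κ → M) → Set M}

theorem CountableTraces.countable_iUnion_traceAt_of_subsingleton (h : CountableTraces L κ A)
    (hG : DefinableFamily L G) (hsub : ∀ b, (G b).Subsingleton) (hΨ : DefinableFamily L Ψ) :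
    (⋃ b, traceAt A Ψ b '' G b).Countable := by
  have hS : (univ : Set M).Definable L
      {w : α ⊕ κ → M | ∃ c, c ∈ G (fun j => w (.inr j)) ∧ c ∈ Ψ w} :=
    DefinablePred.exists_elem (.and (hG.mem _ _) (hΨ.mem _ _))
  refine (h _ hS).mono (iUnion_subset fun b => ?_)
  rintro _ ⟨c, hc, rfl⟩
  refine ⟨b, Set.ext fun a => and_congr_right fun _ => ⟨?_, fun h => ⟨c, hc, h⟩⟩⟩
  rintro ⟨c', hc', h⟩
  exact hsub b hc' hc ▸ h

variable [LinearOrder M]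

theorem CountableTraces.countable_iUnion_traceAt_of_finite [DefinableLT L M]
    (h : CountableTraces L κ A) (hG : DefinableFamily L G) (hfin : ∀ b, (G b).Finite)
    (hΨ : DefinableFamily L Ψ) : (⋃ b, traceAt A Ψ b '' G b).Countable := by
  have hleast (j : ℕ) := h.countable_iUnion_traceAt_of_subsingleton
    (hG.dropLeast_iterate j).isLeast (fun _ _ hx _ hy => hx.unique hy) hΨ
  refine (countable_iUnion hleast).mono (iUnion_subset fun b => ?_)
  rintro _ ⟨c, hc, rfl⟩
  obtain ⟨j, hj⟩ := exists_isLeast_dropLeast_iterate (hfin b) hc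
  exact mem_iUnion_of_mem j (mem_iUnion_of_mem b (mem_image_of_mem _ hj))

namespace IsOMinimal

theorem isFinUnionPointsIntervals [Finite κ] (hM : IsOMinimal L M) (hG : DefinableFamily L G)
    (b : κ → M) : IsFinUnionPointsIntervals (G b) :=
  hM.tame _ ((hG.mem (κ := κ ⊕ Fin 1) Sum.inl (Sum.inr 0)).sumElim b)

theorem countable_iUnion_range_traceAt [Finite α] [Finite κ] (hM : IsOMinimal L M)
    (hA : (univ : Set M).Definable L A) (hAc : A.Countable) (h : CountableTraces L κ A)
    (hΨ : DefinableFamily L Ψ) : (⋃ b, range (traceAt A Ψ b)).Countable := by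
  have := hM.denselyOrdered
  have := hM.noMinOrder
  have := hM.noMaxOrder
  have : DefinableLT L M := ⟨hM.definable_lt⟩
  let _ : TopologicalSpace M := Preorder.topology M
  have : OrderTopology M := ⟨rfl⟩
  rcases isEmpty_or_nonempty M with _ | _
  · simp [range_eq_empty]
  let E (b : κ → M) : Set M := jumps fun a : A => Ψ (Sum.elim a b)
  have hE : DefinableFamily L E := hΨ.frontier.iUnion hA
  have tameΨ (a : α → M) := hM.isFinUnionPointsIntervals (hΨ.sumElim a)
  have tameE := hM.isFinUnionPointsIntervals hE
  have hjump (a : α → M) := h.countable_iUnion_traceAt_of_finite (hΨ.frontier.sumElim a)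
    (fun b => (tameΨ a b).finite_frontier) hΨ
  have hend {Φ} (hΦ : DefinableFamily L Φ) := h.countable_iUnion_traceAt_of_finite
    hE.frontier (fun b => (tameE b).finite_frontier) hΦ
  have hbot := h _ hΨ.eventually_atBot
  refine ((hAc.biUnion fun a _ => hjump a).union
    ((hend hΨ).union ((hend hΨ.eventually_nhdsGT).union hbot))).mono (iUnion_subset fun b => ?_)
  rintro _ ⟨c, rfl⟩
  by_cases hc : c ∈ E b
  · obtain ⟨⟨a, ha⟩, hac⟩ := mem_iUnion.1 hc
    exact .inl (mem_biUnion ha (mem_iUnion_of_mem b ⟨c, hac, rfl⟩))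
  by_cases hcE : c ∈ frontier (E b)
  · exact .inr (.inl (mem_iUnion_of_mem b ⟨c, hcE, rfl⟩))
  rcases mem_iff_eventually_nhdsGT_or_atBot (s := fun a : A => Ψ (Sum.elim a b))
    (fun a => tameΨ a b) (tameE b) hc hcE with ⟨d, hd, hcd⟩ | hc_bot
  · refine .inr (.inr (.inl (mem_iUnion_of_mem b ⟨d, hd, ?_⟩)))
    exact Set.ext fun a => and_congr_right fun ha => (hcd ⟨a, ha⟩).symm
  · refine .inr (.inr (.inr ⟨b, ?_⟩))
    exact Set.ext fun a => and_congr_right fun ha => (hc_bot ⟨a, ha⟩).symm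

theorem countableTraces [Finite α] (hM : IsOMinimal L M) (hA : (univ : Set M).Definable L A)
    (hAc : A.Countable) (k : ℕ) : CountableTraces L (Fin k) A := by
  induction k with
  | zero => exact fun _ _ => countable_range _
  | succ k ih =>
    intro S hS
    refine (hM.countable_iUnion_range_traceAt hA hAc ih (.snoc hS)).mono ?_
    rintro _ ⟨b, rfl⟩
    refine mem_iUnion_of_mem (Fin.init b) ⟨b (Fin.last k), ?_⟩
    simp [traceAt, trace]

end IsOMinimal

end Traces

/-- A countable topological space definable in an o-minimal structure is second-countable. -/
theorem secondCountable_of_countable_definable_top_space {L : FirstOrder.Language.{u, u}}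
    {M : Type u} [L.Structure M] [LinearOrder M] (hM : IsOMinimal L M) {n : ℕ}
    (A : Set (Fin n → M)) (t : TopologicalSpace A) (h : IsDefinableTopSpace L A t)
    (hA : A.Countable) :
    @SecondCountableTopology A t := by
  obtain ⟨hAdef, k, ψ, S, -, hbasis⟩ := h
  have hψ : (univ : Set M).Definable L {w | ψ.Realize w} :=
    (empty_definable_iff.2 ⟨ψ, rfl⟩).mono (empty_subset univ)
  have htraces := hM.countableTraces hAdef hA k _ hψ
  refine hbasis.secondCountableTopology ((htraces.image (Subtype.val ⁻¹' ·)).mono ?_)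
  rintro _ ⟨b, -, rfl⟩
  exact ⟨_, ⟨b, rfl⟩, by ext x; simp [trace]⟩
end

section
/- Let M be an o-minimal structure, let A ⊆ M be an infinite definable subset of the line, and let φ(x;y) be a formula with |x| = 1. Then the family {φ(A;b) : b ∈ M^{|y|}} of subsets of A has cardinality at most |A|. -/
/-!
A nonempty interval `J ⊆ A` is determined by a point `x ∈ J` together with those of its endpoints
that lie in `A`. Indeed, an endpoint outside `A` automatically separates `J` from the part of `A`
beyond it, so it may be moved to `±∞` once everything is intersected with the order-connected
component of `x` in `A`. Hence there are at most `max ℵ₀ |A|` intervals inside `A`, and as many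
finite unions of points and intervals inside `A`. In an o-minimal structure every definable
subset of `A` is such a union.
-/

open FirstOrder FirstOrder.Language Set Cardinal Filter Topology

universe u

section Definability

variable {L : FirstOrder.Language} {M : Type*} [L.Structure M] {α β : Type*}

theorem definable_range_setOf_realize_sumElim (φ : L.Formula (α ⊕ β)) (b : β → M) :
    (range b).Definable L {x : α → M | φ.Realize (Sum.elim x b)} := by
  refine definable_iff_exists_formula_sum.2
    ⟨φ.relabel (Sum.elim Sum.inr fun j => Sum.inl ⟨b j, mem_range_self j⟩), ?_⟩
  ext x
  simp only [mem_ofPred_eq, Formula.realize_relabel, Sum.comp_elim]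
  rfl

theorem definable₁_univ_setOf_realize_sumElim (φ : L.Formula (Fin 1 ⊕ β)) (b : β → M) :
    (univ : Set M).Definable₁ L {a | φ.Realize (Sum.elim (fun _ => a) b)} := by
  have hdef := (definable_range_setOf_realize_sumElim φ b).mono (subset_univ _)
  have hconst (x : Fin 1 → M) : (fun _ => x 0) = x := funext fun i => by rw [Fin.eq_zero i]
  simpa only [Definable₁, mem_ofPred_eq, hconst] using hdef

end Definability

theorem mk_sUnion_image_finite_subsets_le {α : Type u} (𝓒 : Set (Set α)) :
    #(sUnion '' {F : Set (Set α) | F.Finite ∧ F ⊆ 𝓒}) ≤ max ℵ₀ #𝓒 := by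
  have hlists : sUnion '' {F : Set (Set α) | F.Finite ∧ F ⊆ 𝓒} ⊆
      range fun l : List 𝓒 => ⋃ c ∈ l, (c : Set α) := by
    rintro _ ⟨F, ⟨hFfin, hF𝓒⟩, rfl⟩
    lift F to Finset (Set α) using hFfin
    refine ⟨F.toList.attachWith (· ∈ 𝓒) fun _ hc => hF𝓒 (Finset.mem_toList.1 hc), ?_⟩
    ext x
    simpa using exists_congr fun c => and_congr_right fun hc => and_iff_right_of_imp fun _ => hF𝓒 hc
  exact (mk_le_mk_of_subset hlists).trans (mk_range_le.trans (mk_list_le_max 𝓒))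

section LinearOrder

variable {M : Type u} [LinearOrder M] {A : Set M} {x : M} {l : WithBot M} {r : WithTop M}

/-- The open interval `(l, r)` of `M` with endpoints in `M ∪ {-∞, +∞}`, as a subset of `M`. -/
def extendedIoo (l : WithBot M) (r : WithTop M) : Set M :=
  {x | l < (x : WithBot M) ∧ (x : WithTop M) < r}

theorem ordConnected_extendedIoo (l : WithBot M) (r : WithTop M) :
    (extendedIoo l r).OrdConnected :=
  ⟨fun _ ha _ hb _ hy =>
    ⟨ha.1.trans_le (WithBot.coe_le_coe.2 hy.1), (WithTop.coe_le_coe.2 hy.2).trans_lt hb.2⟩⟩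

theorem lt_of_lt_of_mem_ordConnectedComponent {a y : M} (ha : a ∉ A) (hax : a < x)
    (hy : y ∈ ordConnectedComponent A x) : a < y :=
  not_le.1 fun hya => ha (hy (mem_uIcc.2 (Or.inr ⟨hya, hax.le⟩)))

theorem lt_of_mem_ordConnectedComponent_of_lt {a y : M} (ha : a ∉ A)
    (hy : y ∈ ordConnectedComponent A x) (hxa : x < a) : y < a :=
  not_le.1 fun hay => ha (hy (mem_uIcc.2 (Or.inl ⟨hxa.le, hay⟩)))

theorem exists_withBot_forall_lt_iff_of_lt (hl : l < (x : WithBot M)) :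
    ∃ l' : WithBot A, ∀ y ∈ ordConnectedComponent A x,
      (l < (y : WithBot M) ↔ l'.map (↑) < (y : WithBot M)) := by
  induction l with
  | bot => exact ⟨⊥, fun _ _ => Iff.rfl⟩
  | coe a =>
    by_cases ha : a ∈ A
    · exact ⟨((⟨a, ha⟩ : A) : WithBot A), fun _ _ => Iff.rfl⟩
    · exact ⟨⊥, fun y hy => iff_of_true
        (WithBot.coe_lt_coe.2 <|
          lt_of_lt_of_mem_ordConnectedComponent ha (WithBot.coe_lt_coe.1 hl) hy)
        (WithBot.bot_lt_coe y)⟩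

theorem exists_withTop_forall_lt_iff_of_lt (hr : (x : WithTop M) < r) :
    ∃ r' : WithTop A, ∀ y ∈ ordConnectedComponent A x,
      ((y : WithTop M) < r ↔ (y : WithTop M) < r'.map (↑)) := by
  induction r with
  | top => exact ⟨⊤, fun _ _ => Iff.rfl⟩
  | coe a =>
    by_cases ha : a ∈ A
    · exact ⟨((⟨a, ha⟩ : A) : WithTop A), fun _ _ => Iff.rfl⟩
    · exact ⟨⊤, fun y hy => iff_of_true
        (WithTop.coe_lt_coe.2 <|
          lt_of_mem_ordConnectedComponent_of_lt ha hy (WithTop.coe_lt_coe.1 hr))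
        (WithTop.coe_lt_top y)⟩

theorem exists_extendedIoo_eq_ordConnectedComponent_inter (hx : x ∈ extendedIoo l r)
    (hA : extendedIoo l r ⊆ A) :
    ∃ (l' : WithBot A) (r' : WithTop A),
      extendedIoo l r = ordConnectedComponent A x ∩ extendedIoo (l'.map (↑)) (r'.map (↑)) := by
  obtain ⟨l', hl'⟩ := exists_withBot_forall_lt_iff_of_lt (A := A) hx.1
  obtain ⟨r', hr'⟩ := exists_withTop_forall_lt_iff_of_lt (A := A) hx.2
  have := ordConnected_extendedIoo l r
  have hcomponent : extendedIoo l r ⊆ ordConnectedComponent A x :=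
    subset_ordConnectedComponent hx hA
  refine ⟨l', r', (inter_eq_right.2 hcomponent).symm.trans ?_⟩
  ext y
  exact and_congr_right fun hy => and_congr (hl' y hy) (hr' y hy)

theorem mk_extendedIoo_subset_le (A : Set M) :
    #{J : Set M | J ⊆ A ∧ ∃ l r, J = extendedIoo l r} ≤ max ℵ₀ #A := by
  let interval : A × WithBot A × WithTop A → Set M := fun q =>
    ordConnectedComponent A q.1 ∩ extendedIoo (q.2.1.map (↑)) (q.2.2.map (↑))
  have hinterval : {J : Set M | J ⊆ A ∧ ∃ l r, J = extendedIoo l r} ⊆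
      insert ∅ (range interval) := by
    rintro _ ⟨hJA, l, r, rfl⟩
    obtain hempty | ⟨x, hx⟩ := (extendedIoo l r).eq_empty_or_nonempty
    · exact Or.inl hempty
    · obtain ⟨l', r', h⟩ := exists_extendedIoo_eq_ordConnectedComponent_inter hx hJA
      exact Or.inr ⟨(⟨x, hJA hx⟩, l', r'), h.symm⟩
  have hℵ₀ : ℵ₀ ≤ max ℵ₀ #A := le_max_left _ _
  have hA : #A ≤ max ℵ₀ #A := le_max_right _ _
  have hone : 1 ≤ max ℵ₀ #A := one_le_aleph0.trans hℵ₀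
  have hoption : #(Option A) ≤ max ℵ₀ #A := mk_option.trans_le (add_le_of_le hℵ₀ hA hone)
  calc #{J : Set M | J ⊆ A ∧ ∃ l r, J = extendedIoo l r}
      ≤ #(range interval) + 1 := (mk_le_mk_of_subset hinterval).trans mk_insert_le
    _ ≤ #(A × WithBot A × WithTop A) + 1 := by gcongr; exact mk_range_le
    _ = #A * (#(Option A) * #(Option A)) + 1 := by simp only [mk_prod, lift_id]; rfl
    _ ≤ max ℵ₀ #A :=
      add_le_of_le hℵ₀ (mul_le_of_le hℵ₀ hA (mul_le_of_le hℵ₀ hoption hoption)) hone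

/-- The cells of the line contained in `A`, i.e. the points of `A` and the open intervals inside
`A`: the pieces of the finite unions being counted. The empty interval is allowed. -/
def cellsIn (A : Set M) : Set (Set M) :=
  singleton '' A ∪ {J | J ⊆ A ∧ ∃ l r, J = extendedIoo l r}

theorem mk_cellsIn_le (A : Set M) : #(cellsIn A) ≤ max ℵ₀ #A :=
  (mk_union_le _ _).trans <| add_le_of_le (le_max_left _ _)
    (mk_image_le.trans (le_max_right _ _)) (mk_extendedIoo_subset_le A)

theorem IsFinUnionPointsIntervals.exists_finite_subset_cellsIn {s : Set M}
    (hs : IsFinUnionPointsIntervals s) (hsA : s ⊆ A) :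
    ∃ F : Set (Set M), (F.Finite ∧ F ⊆ cellsIn A) ∧ ⋃₀ F = s := by
  obtain ⟨P, I, rfl⟩ := hs
  obtain ⟨hPA, hIA⟩ := union_subset_iff.1 hsA
  refine ⟨singleton '' (P : Set M) ∪
    (fun p : WithBot M × WithTop M => extendedIoo p.1 p.2) '' (I : Set (WithBot M × WithTop M)),
    ⟨(P.finite_toSet.image _).union (I.finite_toSet.image _),
      union_subset_union (image_mono hPA) ?_⟩, ?_⟩
  · rintro _ ⟨p, hp, rfl⟩
    exact ⟨(subset_biUnion_of_mem hp).trans hIA, p.1, p.2, rfl⟩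
  · simp only [sUnion_union, sUnion_image, biUnion_of_singleton]
    rfl

theorem mk_isFinUnionPointsIntervals_subset_le (A : Set M) :
    #{s : Set M | IsFinUnionPointsIntervals s ∧ s ⊆ A} ≤ max ℵ₀ #A :=
  calc #{s : Set M | IsFinUnionPointsIntervals s ∧ s ⊆ A}
      ≤ #(sUnion '' {F : Set (Set M) | F.Finite ∧ F ⊆ cellsIn A}) :=
        mk_le_mk_of_subset fun _ hs => hs.1.exists_finite_subset_cellsIn hs.2
    _ ≤ max ℵ₀ #(cellsIn A) := mk_sUnion_image_finite_subsets_le _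
    _ ≤ max ℵ₀ #A := max_le (le_max_left _ _) (mk_cellsIn_le A)

end LinearOrder

theorem card_definable_family_le_one_var_general {L : FirstOrder.Language} {M : Type u}
    [L.Structure M] [LinearOrder M] (hM : IsOMinimal L M) {A : Set M} (hA : A.Infinite) :
    #{s : Set M | (univ : Set M).Definable₁ L s ∧ s ⊆ A} ≤ #A :=
  calc #{s : Set M | (univ : Set M).Definable₁ L s ∧ s ⊆ A}
      ≤ #{s : Set M | IsFinUnionPointsIntervals s ∧ s ⊆ A} :=
        mk_le_mk_of_subset fun s hs => ⟨hM.tame s hs.1, hs.2⟩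
    _ ≤ max ℵ₀ #A := mk_isFinUnionPointsIntervals_subset_le A
    _ = #A := max_eq_right (infinite_iff.1 hA.to_subtype)

/-- One-variable case of the main result: in an o-minimal structure `M`, for any infinite
definable subset `A ⊆ M` of the line and any formula `φ(x;y)` with `|x| = 1`, the family
`{φ(A;b) : b ∈ M^|y|}` has cardinality at most `|A|`. -/
theorem card_definable_family_le_one_var {L : FirstOrder.Language.{u, u}} {M : Type u}
    [L.Structure M] [LinearOrder M] (hM : IsOMinimal L M) (A : Set M)
    (hAdef : (Set.univ : Set M).Definable₁ L A) (hAinf : A.Infinite)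
    {k : ℕ} (φ : L.Formula (Fin 1 ⊕ Fin k)) :
    #{s : Set M | ∃ b : Fin k → M,
        s = {a ∈ A | φ.Realize (Sum.elim (fun _ => a) b)}} ≤ #A := by
  refine (mk_le_mk_of_subset ?_).trans (card_definable_family_le_one_var_general hM hAinf)
  rintro _ ⟨b, rfl⟩
  exact ⟨hAdef.inter (definable₁_univ_setOf_realize_sumElim φ b), sep_subset _ _⟩
end
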